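/- Let X be a metric space that is δ-hyperbolic (four-point condition) for some δ ≥ 0. Let x = {x_i} and y = {y_i} be two sequences in X tending to infinity (with common basepoint x₀ = the 0-th term of x) which are equivalent, i.e. lim_{i,j→∞} (x_i, y_j)_{x₀} = ∞. Then for every point a ∈ X, |η_x(a) − η_y(a) − η_x(y₀)| ≤ 16δ, where η_x(a) = limsup_{n→∞} (d(a,x_n) − d(x₀,x_n)) and η_y(a) = limsup_{n→∞} (d(a,y_n) − d(y₀,y_n)). -/

import Mathlib

/-!
If the Gromov product of `u` and `v` is large compared with the position of two points `p`, `q`,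
then `d(p, q) + d(u, v)` cannot realise the maximum in the four-point inequality, so
`d(p, ·) - d(q, ·)` takes values at `u` and at `v` that differ by at most `2δ`. For equivalent
sequences and `p = a`, `q = y₀`, this compares `d(a, x_i) - d(y₀, x_i)`, the difference of the terms
defining `η_x(a)` and `η_x(y₀)`, with the term defining `η_y(a)` at every late index `j`. Taking
the upper limit over `i` with `j` fixed, and then over `j`, adds no further error.
-/

open Filter

/-- The four-point condition for `δ`-hyperbolicity, with no sign condition on `δ`. -/
def IsFourPointHyperbolic (X : Type*) [PseudoMetricSpace X] (δ : ℝ) : Prop :=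
  ∀ p₁ p₂ p₃ p₄ : X,
    dist p₁ p₄ + dist p₂ p₃ ≤
      max (dist p₁ p₂ + dist p₃ p₄) (dist p₁ p₃ + dist p₂ p₄) + 2 * δ

/-- The Gromov product `(u, v)_o`, with the basepoint `o` as first argument. -/
noncomputable def gromovProduct {X : Type*} [PseudoMetricSpace X] (o u v : X) : ℝ :=
  (dist u o + dist v o - dist u v) / 2

/-- The quasi-horofunction `η_u(a)` of a family `u` along a filter `f`, normalised to vanish at `o`
when `f` is nontrivial. -/
noncomputable def quasiHorofunction {X ι : Type*} [PseudoMetricSpace X] (f : Filter ι) (u : ι → X)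
    (o a : X) : ℝ :=
  limsup (fun i => dist a (u i) - dist o (u i)) f

section Limsup

variable {ι κ : Type*} {f : Filter ι} {g : Filter κ} [f.NeBot] [g.NeBot]

theorem limsup_add_const_of_isBoundedUnder_abs {h : ι → ℝ}
    (hh : f.IsBoundedUnder (· ≤ ·) fun i => |h i|) (c : ℝ) :
    limsup (fun i => h i + c) f = limsup h f + c :=
  have ⟨hle, hge⟩ := isBoundedUnder_le_abs.mp hh
  limsup_add_const f h c hle hge.isCoboundedUnder_le

theorem limsup_le_limsup_add_of_eventually_le {h k : ι → ℝ} {c : ℝ}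
    (hh : f.IsBoundedUnder (· ≤ ·) fun i => |h i|)
    (hk : f.IsBoundedUnder (· ≤ ·) fun i => |k i|) (hhk : ∀ᶠ i in f, h i ≤ k i + c) :
    limsup h f ≤ limsup k f + c := by
  have hkc : f.IsBoundedUnder (· ≤ ·) fun i => k i + c :=
    isBoundedUnder_le_add (isBoundedUnder_le_abs.mp hk).1 isBoundedUnder_const
  rw [← limsup_add_const_of_isBoundedUnder_abs hk]
  exact limsup_le_limsup hhk (isBoundedUnder_le_abs.mp hh).2.isCoboundedUnder_le hkc

theorem abs_limsup_sub_limsup_sub_le {h k : ι → ℝ} {c ε : ℝ}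
    (hh : f.IsBoundedUnder (· ≤ ·) fun i => |h i|)
    (hk : f.IsBoundedUnder (· ≤ ·) fun i => |k i|) (hhk : ∀ᶠ i in f, |h i - k i - c| ≤ ε) :
    |limsup h f - limsup k f - c| ≤ ε := by
  have upper : limsup h f ≤ limsup k f + (c + ε) :=
    limsup_le_limsup_add_of_eventually_le hh hk <| hhk.mono fun i hi => by
      linarith [(abs_le.mp hi).2]
  have lower : limsup k f ≤ limsup h f + (ε - c) :=
    limsup_le_limsup_add_of_eventually_le hk hh <| hhk.mono fun i hi => by
      linarith [(abs_le.mp hi).1]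
  rw [abs_le]
  constructor <;> linarith

theorem abs_limsup_sub_limsup_sub_limsup_le {h k : ι → ℝ} {w : κ → ℝ} {ε : ℝ}
    (hh : f.IsBoundedUnder (· ≤ ·) fun i => |h i|)
    (hk : f.IsBoundedUnder (· ≤ ·) fun i => |k i|)
    (hw : g.IsBoundedUnder (· ≤ ·) fun j => |w j|)
    (hhkw : ∀ᶠ p in f ×ˢ g, |h p.1 - k p.1 - w p.2| ≤ ε) :
    |limsup h f - limsup k f - limsup w g| ≤ ε := by
  have hfixed : ∀ᶠ j in g, |limsup h f - limsup k f - w j| ≤ ε :=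
    (eventually_swap_iff.mp hhkw).curry.mono fun _ hj => abs_limsup_sub_limsup_sub_le hh hk hj
  have ⟨hwle, hwge⟩ := isBoundedUnder_le_abs.mp hw
  have upper : limsup w g ≤ limsup h f - limsup k f + ε :=
    limsup_le_of_le hwge.isCoboundedUnder_le <| hfixed.mono fun j hj => by
      linarith [(abs_le.mp hj).1]
  have lower : limsup h f - limsup k f - ε ≤ limsup w g :=
    le_limsup_of_frequently_le (hfixed.mono fun j hj => by
      linarith [(abs_le.mp hj).2]).frequently hwle
  rw [abs_le]
  constructor <;> linarith

end Limsup

section Hyperbolic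

variable {X ι κ : Type*} [PseudoMetricSpace X] {δ : ℝ} {f : Filter ι} {g : Filter κ}

theorem isBoundedUnder_abs_dist_sub_dist (f : Filter ι) (u : ι → X) (p q : X) :
    f.IsBoundedUnder (· ≤ ·) fun i => |dist p (u i) - dist q (u i)| :=
  isBoundedUnder_of ⟨dist p q, fun i => abs_dist_sub_le p q (u i)⟩

namespace IsFourPointHyperbolic

theorem dist_add_dist_le_of_lt_gromovProduct (hX : IsFourPointHyperbolic X δ) {o p q u v : X}
    (h : dist p o + dist q o + dist p q + 2 * δ < 2 * gromovProduct o u v) :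
    dist p u + dist q v ≤ dist p v + dist q u + 2 * δ := by
  have hmax : dist p q + dist u v + 2 * δ < dist p u + dist q v := by
    have hu : dist u o ≤ dist p u + dist p o := dist_triangle_left u o p
    have hv : dist v o ≤ dist q v + dist q o := dist_triangle_left v o q
    unfold gromovProduct at h
    linarith
  have hfour := hX p q v u
  rw [dist_comm v u, ← max_add_add_right, le_max_iff] at hfour
  exact hfour.resolve_left hmax.not_ge

theorem abs_dist_sub_dist_sub_le (hX : IsFourPointHyperbolic X δ) {o p q u v : X}
    (h : dist p o + dist q o + dist p q + 2 * δ < 2 * gromovProduct o u v) :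
    |(dist p u - dist q u) - (dist p v - dist q v)| ≤ 2 * δ := by
  have hpq := hX.dist_add_dist_le_of_lt_gromovProduct h
  have hqp : dist q u + dist p v ≤ dist q v + dist p u + 2 * δ :=
    hX.dist_add_dist_le_of_lt_gromovProduct (o := o) <| by
      rwa [dist_comm q p, add_comm (dist q o)]
  rw [abs_le]
  constructor <;> linarith

theorem eventually_abs_dist_sub_dist_sub_le (hX : IsFourPointHyperbolic X δ) {o : X}
    {u : ι → X} {v : κ → X} {l : Filter (ι × κ)}
    (huv : Tendsto (fun i => gromovProduct o (u i.1) (v i.2)) l atTop) (p q : X) :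
    ∀ᶠ i in l,
      |(dist p (u i.1) - dist q (u i.1)) - (dist p (v i.2) - dist q (v i.2))| ≤ 2 * δ :=
  ((huv.const_mul_atTop two_pos).eventually_gt_atTop _).mono fun _ hi =>
    hX.abs_dist_sub_dist_sub_le hi

end IsFourPointHyperbolic

theorem quasi_horofunction_change_of_sequence_general [f.NeBot] [g.NeBot]
    (hX : IsFourPointHyperbolic X δ) {o : X} {u : ι → X} {v : κ → X}
    (huv : Tendsto (fun i => gromovProduct o (u i.1) (v i.2)) (f ×ˢ g) atTop) (a b c : X) :
    |quasiHorofunction f u b a - quasiHorofunction g v c a - quasiHorofunction f u b c| ≤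
      2 * δ := by
  rw [sub_right_comm]
  refine abs_limsup_sub_limsup_sub_limsup_le (isBoundedUnder_abs_dist_sub_dist f u a b)
    (isBoundedUnder_abs_dist_sub_dist f u c b) (isBoundedUnder_abs_dist_sub_dist g v a c) ?_
  simpa only [sub_sub_sub_cancel_right] using hX.eventually_abs_dist_sub_dist_sub_le huv a c

end Hyperbolic

/-- Let `X` be δ-hyperbolic (four-point condition), and let `{x i}` and
`{y i}` be equivalent sequences tending to infinity. Then for every `a ∈ X`,
`|η_x(a) − η_y(a) − η_x(y 0)| ≤ 16δ`. -/
theorem quasi_horofunction_change_of_sequence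
    (X : Type*) [MetricSpace X]
    (δ : ℝ) (hδ : 0 ≤ δ)
    (hhyp : ∀ p₁ p₂ p₃ p₄ : X,
      dist p₁ p₄ + dist p₂ p₃ ≤
        max (dist p₁ p₂ + dist p₃ p₄) (dist p₁ p₃ + dist p₂ p₄) + 2 * δ)
    (x y : ℕ → X)
    -- `{x i}` tends to infinity
    (hx : Tendsto
      (fun p : ℕ × ℕ =>
        (dist (x p.1) (x 0) + dist (x p.2) (x 0) - dist (x p.1) (x p.2)) / 2)
      atTop atTop)
    -- `{y i}` tends to infinity
    (hy : Tendsto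
      (fun p : ℕ × ℕ =>
        (dist (y p.1) (x 0) + dist (y p.2) (x 0) - dist (y p.1) (y p.2)) / 2)
      atTop atTop)
    -- the two sequences are equivalent: `(x i, y j)_{x 0} → ∞`
    (hequiv : Tendsto
      (fun p : ℕ × ℕ =>
        (dist (x p.1) (x 0) + dist (y p.2) (x 0) - dist (x p.1) (y p.2)) / 2)
      atTop atTop)
    (a : X) :
    |limsup (fun m => dist a (x m) - dist (x 0) (x m)) atTop -
      limsup (fun m => dist a (y m) - dist (y 0) (y m)) atTop -
      limsup (fun m => dist (y 0) (x m) - dist (x 0) (x m)) atTop| ≤ 16 * δ := by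
  rw [← prod_atTop_atTop_eq] at hequiv
  exact (quasi_horofunction_change_of_sequence_general hhyp hequiv a (x 0) (y 0)).trans
    (by linarith)
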